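/- For the full shift T on X = ∏_{n∈ℤ} M over a perfect Polish metric space M, the set M_e of ergodic T-invariant Borel probability measures is a residual subset of M(T) endowed with the weak topology. -/

import Mathlib

open Filter MeasureTheory Topology Metric Set
open scoped ENNReal NNReal

noncomputable section
attribute [local instance] Classical.propDecidable

/-- The full (bilateral) shift on the product space `ℤ → M`: `(T x) i = x (i - 1)`. -/
def fullShift {M : Type*} (x : ℤ → M) : ℤ → M := fun i => x (i - 1)

/-- The metric `d(x,y) = ∑_{n ∈ ℤ} 2^{-|n|} ρ(xₙ,yₙ)/(1 + ρ(xₙ,yₙ))` on `ℤ → M`,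
compatible with the product topology. -/
def shiftDist {M : Type*} [MetricSpace M] (x y : ℤ → M) : ℝ :=
  ∑' n : ℤ, (1 / 2 : ℝ) ^ n.natAbs * (dist (x n) (y n) / (1 + dist (x n) (y n)))

/-- Lower local dimension `d̲_μ(x) = liminf_{ε → 0⁺} log μ(B(x,ε)) / log ε` of `μ` at `x`,
with respect to the distance function `d`; by convention it is `∞` if some ball
centered at `x` has measure zero. -/
def lowerLocalDim {X : Type*} [MeasurableSpace X] (d : X → X → ℝ)
    (μ : Measure X) (x : X) : ℝ≥0∞ :=
  if ∃ ε > 0, μ {y | d x y < ε} = 0 then ⊤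
  else liminf (fun ε : ℝ =>
    ENNReal.ofReal (Real.log (μ {y | d x y < ε}).toReal / Real.log ε)) (𝓝[>] (0 : ℝ))

/-- Upper local dimension `d̄_μ(x) = limsup_{ε → 0⁺} log μ(B(x,ε)) / log ε`. -/
def upperLocalDim {X : Type*} [MeasurableSpace X] (d : X → X → ℝ)
    (μ : Measure X) (x : X) : ℝ≥0∞ :=
  if ∃ ε > 0, μ {y | d x y < ε} = 0 then ⊤
  else limsup (fun ε : ℝ =>
    ENNReal.ofReal (Real.log (μ {y | d x y < ε}).toReal / Real.log ε)) (𝓝[>] (0 : ℝ))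

/-- The ratio `log τ_r(x) / (- log r)`, where `τ_r(x) = inf {n ≥ 1 | Tⁿ x ∈ B̄(x,r)}` is the
first return time of `x` to the closed ball `B̄(x,r)`; by convention it is `∞` when the
return time is infinite. -/
def recRatio {X : Type*} (d : X → X → ℝ) (T : X → X) (x : X) (r : ℝ) : ℝ≥0∞ :=
  if ∃ n : ℕ, 1 ≤ n ∧ d (T^[n] x) x ≤ r then
    ENNReal.ofReal
      (Real.log ((sInf {n : ℕ | 1 ≤ n ∧ d (T^[n] x) x ≤ r} : ℕ) : ℝ) / (- Real.log r))
  else ⊤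

/-- Lower recurrence rate `R̲(x) = liminf_{r → 0⁺} log τ_r(x) / (- log r)`. -/
def lowerRecRate {X : Type*} (d : X → X → ℝ) (T : X → X) (x : X) : ℝ≥0∞ :=
  liminf (recRatio d T x) (𝓝[>] (0 : ℝ))

/-- Upper recurrence rate `R̄(x) = limsup_{r → 0⁺} log τ_r(x) / (- log r)`. -/
def upperRecRate {X : Type*} (d : X → X → ℝ) (T : X → X) (x : X) : ℝ≥0∞ :=
  limsup (recRatio d T x) (𝓝[>] (0 : ℝ))

/-- The ratio `log τ_r(x,y) / (- log r)`, where `τ_r(x,y) = inf {n ≥ 1 | Tⁿ x ∈ B̄(y,r)}` is the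
first entrance time of the orbit of `x` into the closed ball `B̄(y,r)`; by convention `∞`
when the entrance time is infinite. -/
def waitRatio {X : Type*} (d : X → X → ℝ) (T : X → X) (x y : X) (r : ℝ) : ℝ≥0∞ :=
  if ∃ n : ℕ, 1 ≤ n ∧ d (T^[n] x) y ≤ r then
    ENNReal.ofReal
      (Real.log ((sInf {n : ℕ | 1 ≤ n ∧ d (T^[n] x) y ≤ r} : ℕ) : ℝ) / (- Real.log r))
  else ⊤

/-- Lower quantitative waiting time indicator `R̲(x,y)`. -/
def lowerWaitRate {X : Type*} (d : X → X → ℝ) (T : X → X) (x y : X) : ℝ≥0∞ :=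
  liminf (waitRatio d T x y) (𝓝[>] (0 : ℝ))

/-- Upper quantitative waiting time indicator `R̄(x,y)`. -/
def upperWaitRate {X : Type*} (d : X → X → ℝ) (T : X → X) (x y : X) : ℝ≥0∞ :=
  limsup (waitRatio d T x y) (𝓝[>] (0 : ℝ))

/-- The entropy `H(P) = ∑_c -μ(P_c) log μ(P_c)` of the finite measurable partition
`P_c = f ⁻¹ {c}` of `X` induced by a map `f` into a finite set. -/
def partitionEntropy {X F : Type*} [MeasurableSpace X] [Fintype F]
    (μ : Measure X) (f : X → F) : ℝ :=
  ∑ c : F, Real.negMulLog ((μ (f ⁻¹' {c})).toReal)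

/-- The Kolmogorov–Sinai (measure-theoretic) entropy `h_μ(T)`: the supremum, over all finite
measurable partitions (coded by measurable maps `f : X → Fin k`), of the limit of
`H(⋁_{i<n} T⁻ⁱ P) / n`. -/
def kolmogorovSinaiEntropy {X : Type*} [MeasurableSpace X] (T : X → X) (μ : Measure X) :
    ℝ≥0∞ :=
  ⨆ (k : ℕ) (f : X → Fin k) (_ : Measurable f),
    ENNReal.ofReal
      (liminf (fun n : ℕ =>
        partitionEntropy μ (fun x (i : Fin n) => f (T^[(i : ℕ)] x)) / n) atTop)

end

/-!
By the mean ergodic theorem, an invariant measure `μ` is ergodic iff for every `f` in a suitable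
countable family of bounded continuous functions the variance of the Birkhoff averages of `f` gets
arbitrarily small. For each `f`, `n` and `ε` the condition `Var[birkhoffAverage f n; μ] < ε` is
weakly open in `μ`, so the ergodic measures form a Gδ set.

They are dense because an invariant `μ` is approximated by gluing independent `μ`-distributed
blocks of length `N`: the glued measure is a factor of a Bernoulli shift, hence ergodic for the
`N`-th power of the shift, and averaging its first `N` translates yields an ergodic measure of the
shift that differs from `μ` by `O(1/N)` on each cylinder, since only `O(1)` of these translates see
a block boundary.
-/

open BoundedContinuousFunction ProbabilityTheory
open scoped symmDiff

section Variance

variable {Ω : Type*} [MeasurableSpace Ω] {μ : Measure Ω}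

theorem sq_covariance_le_variance_mul_variance [IsFiniteMeasure μ] {X Y : Ω → ℝ} (hX : MemLp X 2 μ)
    (hY : MemLp Y 2 μ) : cov[X, Y; μ] ^ 2 ≤ Var[X; μ] * Var[Y; μ] := by
  have hquad (t : ℝ) : 0 ≤ Var[X; μ] * (t * t) + 2 * cov[X, Y; μ] * t + Var[Y; μ] := by
    have h := variance_nonneg (t • X + Y) μ
    rw [variance_add (hX.const_smul t) hY, variance_smul, covariance_smul_left] at h
    linarith
  have h := discrim_le_zero hquad
  rw [discrim] at h
  linarith

variable [IsProbabilityMeasure μ]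

theorem covariance_indicator_one {A : Set Ω} (hA : MeasurableSet A) {f : Ω → ℝ}
    (hf : MemLp f 2 μ) :
    cov[A.indicator 1, f; μ] = ∫ x in A, f x ∂μ - μ.real A * ∫ x, f x ∂μ := by
  have hmul : A.indicator 1 * f = A.indicator f := by
    ext x
    by_cases hx : x ∈ A <;> simp [hx]
  have hone : MemLp (A.indicator 1) 2 μ := (memLp_const (1 : ℝ)).indicator hA
  rw [covariance_eq_sub hone hf, hmul, integral_indicator hA,
    integral_indicator_one hA]

theorem variance_le_sq_norm_toLp_sub_const {f : Ω → ℝ} (hf : MemLp f 2 μ) (c : ℝ) :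
    Var[f; μ] ≤ ‖hf.toLp f - Lp.const 2 μ c‖ ^ 2 := by
  have hcoe : hf.toLp f - Lp.const 2 μ c =ᵐ[μ] fun x => f x - c := by
    filter_upwards [Lp.coeFn_sub (hf.toLp f) (Lp.const 2 μ c), hf.coeFn_toLp,
      Lp.coeFn_const (p := 2) (μ := μ) c] with x hsub hfx hc
    rw [hsub, Pi.sub_apply, hfx, hc, Function.const_apply]
  calc Var[f; μ] = Var[fun x => f x - c; μ] := (variance_sub_const hf.1 c).symm
    _ ≤ ∫ x, (f x - c) ^ 2 ∂μ := variance_le_expectation_sq (hf.1.sub aestronglyMeasurable_const)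
    _ = ‖hf.toLp f - Lp.const 2 μ c‖ ^ 2 := by
      rw [← real_inner_self_eq_norm_sq, L2.inner_def]
      refine integral_congr_ae (hcoe.mono fun x hx => ?_)
      simp only [hx, real_inner_self_eq_norm_sq, Real.norm_eq_abs, sq_abs]

end Variance

section Koopman

variable {X E : Type*} [NormedAddCommGroup E]

theorem birkhoffAverage_eq_smul_sum_comp [NormedSpace ℝ E] (T : X → X) (f : X → E) (n : ℕ) :
    birkhoffAverage ℝ T f n = (n : ℝ)⁻¹ • ∑ k ∈ Finset.range n, f ∘ T^[k] := by
  ext x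
  simp only [birkhoffAverage, birkhoffSum, Pi.smul_apply, Finset.sum_apply, Function.comp_apply]

variable [MeasurableSpace X] {p : ℝ≥0∞} {T : X → X} {μ : Measure X}

theorem exists_eq_Lp_const_of_compMeasurePreserving_eq [IsFiniteMeasure μ]
    (hT : Ergodic T μ) {φ : Lp E p μ}
    (hφ : Lp.compMeasurePreserving T hT.toMeasurePreserving φ = φ) :
    ∃ c, φ = Lp.const p μ c := by
  obtain ⟨c, hc⟩ := hT.eq_const_of_compMeasurePreserving_eq (congrArg Subtype.val hφ)
  exact ⟨c, Subtype.ext hc⟩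

variable [NormedSpace ℝ E] {f : X → E}

theorem memLp_birkhoffAverage (hT : MeasurePreserving T μ μ) (hf : MemLp f p μ) (n : ℕ) :
    MemLp (birkhoffAverage ℝ T f n) p μ := by
  rw [birkhoffAverage_eq_smul_sum_comp]
  exact (memLp_finsetSum' _ fun k _ => hf.comp_measurePreserving (hT.iterate k)).const_smul _

theorem birkhoffAverage_compMeasurePreserving_toLp (hT : MeasurePreserving T μ μ)
    (hf : MemLp f p μ) (n : ℕ) :
    birkhoffAverage ℝ (Lp.compMeasurePreserving T hT) id n (hf.toLp f) =
      (memLp_birkhoffAverage hT hf n).toLp := by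
  have hiter (k : ℕ) : (Lp.compMeasurePreserving T hT)^[k] (hf.toLp f) =
      (hf.comp_measurePreserving (hT.iterate k)).toLp := by
    rw [Lp.compMeasurePreserving_iterate, Lp.toLp_compMeasurePreserving]
  have hterm : ∀ᵐ x ∂μ, ∀ k, (hf.comp_measurePreserving (hT.iterate k)).toLp _ x = f (T^[k] x) :=
    ae_all_iff.2 fun k => (hf.comp_measurePreserving (hT.iterate k)).coeFn_toLp
  have hsum := Lp.coeFn_finsetSum (Finset.range n)
    fun k => (hf.comp_measurePreserving (hT.iterate k)).toLp (f ∘ T^[k])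
  simp only [birkhoffAverage, birkhoffSum, hiter, id]
  refine Lp.ext ?_
  filter_upwards [hterm, hsum, Lp.coeFn_smul (n : ℝ)⁻¹ (∑ k ∈ Finset.range n,
    (hf.comp_measurePreserving (hT.iterate k)).toLp (f ∘ T^[k])),
    (memLp_birkhoffAverage hT hf n).coeFn_toLp] with x hk hs hsm havg
  rw [hsm, havg, Pi.smul_apply, hs, Finset.sum_apply]
  simp only [hk, birkhoffAverage, birkhoffSum]

end Koopman

section MeanErgodic

variable {X : Type*} [MeasurableSpace X] {T : X → X} {μ : Measure X} {f g : X → ℝ}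

/-- The observable `f` is mean ergodic for `(T, μ)` if its Birkhoff averages have arbitrarily small
variance, that is, come arbitrarily close to constants in `L²(μ)`. For invariant `μ` these variances
in fact converge; the weaker requirement here exhibits the condition as an intersection of
countably many weakly open conditions on `μ`. -/
def IsMeanErgodic (T : X → X) (μ : Measure X) (f : X → ℝ) : Prop :=
  ∀ ε > 0, ∃ n ≠ 0, Var[birkhoffAverage ℝ T f n; μ] < ε

theorem covariance_birkhoffAverage_of_comp_eq [IsFiniteMeasure μ]
    (hT : MeasurePreserving T μ μ) (hg : MemLp g 2 μ) (hgT : g ∘ T = g) (hf : MemLp f 2 μ)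
    {n : ℕ} (hn : n ≠ 0) : cov[g, birkhoffAverage ℝ T f n; μ] = cov[g, f; μ] := by
  have hterm (k : ℕ) : cov[g, f ∘ T^[k]; μ] = cov[g, f; μ] := by
    have hk := hT.iterate k
    have hgk : g ∘ T^[k] = g := by
      induction k with
      | zero => rfl
      | succ k ih => rw [Function.iterate_succ, ← Function.comp_assoc, ih (hT.iterate k), hgT]
    calc cov[g, f ∘ T^[k]; μ]
        = cov[g ∘ T^[k], f ∘ T^[k]; μ] := by rw [hgk]
      _ = cov[g, f; μ.map T^[k]] :=
          (covariance_map (by simpa only [hk.map_eq] using hg.1)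
            (by simpa only [hk.map_eq] using hf.1) hk.aemeasurable).symm
      _ = cov[g, f; μ] := by rw [hk.map_eq]
  rw [birkhoffAverage_eq_smul_sum_comp, covariance_smul_right,
    covariance_sum_right' (fun k _ => hf.comp_measurePreserving (hT.iterate k)) hg]
  simp only [hterm, Finset.sum_const, Finset.card_range, nsmul_eq_mul]
  exact inv_mul_cancel_left₀ (Nat.cast_ne_zero.2 hn) _

theorem IsMeanErgodic.covariance_eq_zero [IsFiniteMeasure μ] (h : IsMeanErgodic T μ f)
    (hT : MeasurePreserving T μ μ) (hf : MemLp f 2 μ) (hg : MemLp g 2 μ) (hgT : g ∘ T = g) :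
    cov[g, f; μ] = 0 := by
  have hle (ε : ℝ) (hε : 0 < ε) : cov[g, f; μ] ^ 2 ≤ Var[g; μ] * ε := by
    obtain ⟨n, hn, hvar⟩ := h ε hε
    rw [← covariance_birkhoffAverage_of_comp_eq hT hg hgT hf hn]
    exact (sq_covariance_le_variance_mul_variance hg (memLp_birkhoffAverage hT hf n)).trans
      (mul_le_mul_of_nonneg_left hvar.le (variance_nonneg g μ))
  have hlim : Tendsto (fun ε => Var[g; μ] * ε) (𝓝[>] 0) (𝓝 0) := by
    simpa using (tendsto_id.const_mul Var[g; μ]).mono_left (nhdsWithin_le_nhds (a := (0 : ℝ)))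
  have hsq : cov[g, f; μ] ^ 2 ≤ 0 :=
    ge_of_tendsto hlim (eventually_mem_nhdsWithin.mono hle)
  exact pow_eq_zero_iff two_ne_zero |>.1 (hsq.antisymm (sq_nonneg _))

theorem isMeanErgodic_of_ergodic [IsProbabilityMeasure μ] (hT : Ergodic T μ) (hf : MemLp f 2 μ) :
    IsMeanErgodic T μ f := by
  intro ε hε
  let U : Lp ℝ 2 μ →ₗᵢ[ℝ] Lp ℝ 2 μ := Lp.compMeasurePreservingₗᵢ ℝ T hT.toMeasurePreserving
  have hlim := U.toContinuousLinearMap.tendsto_birkhoffAverage_orthogonalProjection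
    U.norm_toContinuousLinearMap_le (hf.toLp f)
  obtain ⟨c, hc⟩ := exists_eq_Lp_const_of_compMeasurePreserving_eq hT <| SetLike.coe_mem <|
    (U.toContinuousLinearMap.eqLocus (1 : Lp ℝ 2 μ →L[ℝ] Lp ℝ 2 μ)).orthogonalProjectionOnto
      (hf.toLp f)
  rw [hc] at hlim
  have hsq := (hlim.sub_const (Lp.const 2 μ c)).norm.pow 2
  rw [sub_self, norm_zero, zero_pow two_ne_zero] at hsq
  obtain ⟨n, hlt, hn⟩ := ((hsq.eventually_lt_const hε).and (eventually_ne_atTop 0)).exists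
  refine ⟨n, hn, (variance_le_sq_norm_toLp_sub_const
    (memLp_birkhoffAverage hT.toMeasurePreserving hf n) c).trans_lt ?_⟩
  rw [← birkhoffAverage_compMeasurePreserving_toLp]
  exact hlt

end MeanErgodic

theorem preErgodic_of_forall_prob_eq_zero_or_one {X : Type*} [MeasurableSpace X] {T : X → X}
    {μ : Measure X} [IsProbabilityMeasure μ]
    (h : ∀ A, MeasurableSet A → T ⁻¹' A = A → μ A = 0 ∨ μ A = 1) : PreErgodic T μ where
  aeconst_set A hA hTA := by
    rw [eventuallyConst_set', ae_eq_empty, ae_eq_univ, prob_compl_eq_zero_iff hA]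
    exact h A hA hTA

theorem exists_countable_isPiSystem_isClosed_borel_eq_generateFrom (X : Type*)
    [TopologicalSpace X] [SecondCountableTopology X] :
    ∃ 𝓕 : Set (Set X), 𝓕.Countable ∧ IsPiSystem 𝓕 ∧ (∀ F ∈ 𝓕, IsClosed F) ∧
      borel X = MeasurableSpace.generateFrom 𝓕 := by
  let 𝓑 := TopologicalSpace.countableBasis X
  let 𝓕 : Set (Set X) := sInter '' {𝓢 | 𝓢.Finite ∧ 𝓢 ⊆ compl '' 𝓑}
  have hclosed : ∀ F ∈ 𝓕, IsClosed F := by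
    rintro _ ⟨𝓢, ⟨-, h𝓢⟩, rfl⟩
    refine isClosed_sInter fun F hF => ?_
    obtain ⟨O, hO, rfl⟩ := h𝓢 hF
    exact (TopologicalSpace.isOpen_of_mem_countableBasis hO).isClosed_compl
  refine ⟨𝓕, (countable_ofPred_finite_subset
    ((TopologicalSpace.countable_countableBasis X).image compl)).image sInter, ?_, hclosed, ?_⟩
  · rintro _ ⟨𝓢, ⟨hfin, h𝓢⟩, rfl⟩ _ ⟨𝓢', ⟨hfin', h𝓢'⟩, rfl⟩ -
    exact ⟨𝓢 ∪ 𝓢', ⟨hfin.union hfin', union_subset h𝓢 h𝓢'⟩, sInter_union 𝓢 𝓢'⟩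
  · refine le_antisymm ?_ (MeasurableSpace.generateFrom_le fun F hF => ?_)
    · rw [(TopologicalSpace.isBasis_countableBasis X).borel_eq_generateFrom]
      refine MeasurableSpace.generateFrom_le fun O hO => ?_
      have hOc : Oᶜ ∈ 𝓕 := ⟨{Oᶜ}, ⟨finite_singleton _,
        singleton_subset_iff.2 (mem_image_of_mem compl hO)⟩, sInter_singleton _⟩
      exact MeasurableSet.of_compl (MeasurableSpace.measurableSet_generateFrom hOc)
    · borelize X
      exact (hclosed F hF).measurableSet

theorem exists_boundedContinuousFunction_coe_eq_birkhoffAverage {X : Type*} [TopologicalSpace X]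
    {T : X → X} (hT : Continuous T) (f : X →ᵇ ℝ) (n : ℕ) :
    ∃ g : X →ᵇ ℝ, ⇑g = birkhoffAverage ℝ T f n := by
  refine ⟨(n : ℝ)⁻¹ • ∑ k ∈ Finset.range n, f.compContinuous ⟨T^[k], hT.iterate k⟩, ?_⟩
  ext x
  simp [birkhoffAverage, birkhoffSum]

section MeanErgodicTopology

variable {X : Type*} [TopologicalSpace X] [MeasurableSpace X] [OpensMeasurableSpace X]
  {T : X → X}

theorem memLp_boundedContinuousFunction {p : ℝ≥0∞} {μ : Measure X} [IsFiniteMeasure μ]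
    (f : X →ᵇ ℝ) : MemLp f p μ :=
  MemLp.of_bound f.continuous.aestronglyMeasurable _ (ae_of_all _ f.norm_coe_le_norm)

theorem continuous_variance_boundedContinuousFunction (f : X →ᵇ ℝ) :
    Continuous fun μ : ProbabilityMeasure X => Var[f; μ.toMeasure] := by
  have hvar (μ : ProbabilityMeasure X) :
      Var[f; μ.toMeasure] = ∫ x, (f * f) x ∂μ.toMeasure - (∫ x, f x ∂μ.toMeasure) ^ 2 := by
    rw [variance_eq_sub (memLp_boundedContinuousFunction f), sq (f : X → ℝ)]
    rfl
  simp only [hvar]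
  exact (ProbabilityMeasure.continuous_integral_boundedContinuousFunction (f * f)).sub
    ((ProbabilityMeasure.continuous_integral_boundedContinuousFunction f).pow 2)

theorem isGδ_setOf_isMeanErgodic (hT : Continuous T) (f : X →ᵇ ℝ) :
    IsGδ {μ : ProbabilityMeasure X | IsMeanErgodic T μ.toMeasure f} := by
  have hopen (ε : ℝ) : IsOpen {μ : ProbabilityMeasure X |
      ∃ n ≠ 0, Var[birkhoffAverage ℝ T f n; μ.toMeasure] < ε} := by
    have hunion : {μ : ProbabilityMeasure X |
        ∃ n ≠ 0, Var[birkhoffAverage ℝ T f n; μ.toMeasure] < ε} =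
        ⋃ n ≠ 0, {μ | Var[birkhoffAverage ℝ T f n; μ.toMeasure] < ε} := by
      ext μ
      simp only [mem_ofPred_eq, mem_iUnion, exists_prop]
    rw [hunion]
    refine isOpen_biUnion fun n _ => ?_
    obtain ⟨g, hg⟩ := exists_boundedContinuousFunction_coe_eq_birkhoffAverage hT f n
    simpa only [hg] using
      isOpen_lt (continuous_variance_boundedContinuousFunction g) continuous_const
  have hinter : {μ : ProbabilityMeasure X | IsMeanErgodic T μ.toMeasure f} =
      ⋂ k : ℕ, {μ | ∃ n ≠ 0, Var[birkhoffAverage ℝ T f n; μ.toMeasure] < 1 / ((k : ℝ) + 1)} := by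
    ext μ
    simp only [mem_ofPred_eq, mem_iInter]
    refine ⟨fun h k => h _ Nat.one_div_pos_of_nat, fun h ε hε => ?_⟩
    obtain ⟨k, hk⟩ := exists_nat_one_div_lt hε
    obtain ⟨n, hn, hvar⟩ := h k
    exact ⟨n, hn, hvar.trans hk⟩
  rw [hinter]
  exact IsGδ.iInter_of_isOpen fun k => hopen _

theorem exists_seq_tendsto_integral_measureReal_of_isClosed [HasOuterApproxClosed X] {F : Set X}
    (hF : IsClosed F) :
    ∃ φ : ℕ → X →ᵇ ℝ, ∀ ν : Measure X, IsFiniteMeasure ν →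
      Tendsto (fun j => ∫ x, φ j x ∂ν) atTop (𝓝 (ν.real F)) := by
  refine ⟨fun j => (hF.apprSeq j).comp _ (LipschitzWith.subtype_val _), fun ν _ => ?_⟩
  have h := (ENNReal.tendsto_toReal (measure_ne_top ν F)).comp
    (HasOuterApproxClosed.tendsto_lintegral_apprSeq hF ν)
  exact h.congr fun j => toReal_lintegral_coe_eq_integral (hF.apprSeq j) ν

theorem measure_inter_eq_mul_of_isMeanErgodic {μ : Measure X} [IsProbabilityMeasure μ]
    (hT : MeasurePreserving T μ μ) {A F : Set X} (hA : MeasurableSet A) (hTA : T ⁻¹' A = A)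
    (hF : MeasurableSet F) {φ : ℕ → X →ᵇ ℝ} (hφ : ∀ ν : Measure X, IsFiniteMeasure ν →
      Tendsto (fun j => ∫ x, φ j x ∂ν) atTop (𝓝 (ν.real F)))
    (hmean : ∀ j, IsMeanErgodic T μ (φ j)) :
    μ (A ∩ F) = μ A * μ F := by
  have hinv : (A.indicator 1 : X → ℝ) ∘ T = A.indicator 1 := by
    conv_rhs => rw [← hTA]
    rfl
  have hone : MemLp (A.indicator 1 : X → ℝ) 2 μ := (memLp_const (1 : ℝ)).indicator hA
  have heq (j : ℕ) : ∫ x in A, φ j x ∂μ = μ.real A * ∫ x, φ j x ∂μ := by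
    have hcov := (hmean j).covariance_eq_zero hT (memLp_boundedContinuousFunction _)
      hone hinv
    rwa [covariance_indicator_one hA (memLp_boundedContinuousFunction _), sub_eq_zero] at hcov
  have hlim := hφ (μ.restrict A) inferInstance
  simp only [heq] at hlim
  have hreal : (μ.restrict A).real F = μ.real A * μ.real F :=
    tendsto_nhds_unique hlim ((hφ μ inferInstance).const_mul _)
  rw [measureReal_restrict_apply hF, inter_comm] at hreal
  rwa [← ENNReal.toReal_eq_toReal_iff' (measure_ne_top _ _) (by finiteness), ENNReal.toReal_mul]

end MeanErgodicTopology

section ErgodicGδ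

variable {X : Type*} [TopologicalSpace X] [SecondCountableTopology X] [HasOuterApproxClosed X]
  [MeasurableSpace X] [BorelSpace X]

theorem exists_countable_forall_ergodic_iff_isMeanErgodic (T : X → X) :
    ∃ Φ : Set (X →ᵇ ℝ), Φ.Countable ∧ ∀ μ : Measure X, IsProbabilityMeasure μ →
      MeasurePreserving T μ μ → (Ergodic T μ ↔ ∀ f ∈ Φ, IsMeanErgodic T μ f) := by
  obtain ⟨𝓕, h𝓕count, h𝓕pi, h𝓕closed, h𝓕gen⟩ :=
    exists_countable_isPiSystem_isClosed_borel_eq_generateFrom X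
  choose! φ hφ using fun F hF => exists_seq_tendsto_integral_measureReal_of_isClosed (h𝓕closed F hF)
  refine ⟨⋃ F ∈ 𝓕, range (φ F), h𝓕count.biUnion fun F _ => countable_range _,
    fun μ _ hT => ⟨fun h f _ => isMeanErgodic_of_ergodic h (memLp_boundedContinuousFunction f),
      fun h => ⟨hT, preErgodic_of_forall_prob_eq_zero_or_one fun A hA hTA => ?_⟩⟩⟩
  have hindep : IndepSets {A} 𝓕 μ := by
    rw [IndepSets_iff]
    rintro _ F rfl hF
    exact measure_inter_eq_mul_of_isMeanErgodic hT hA hTA (h𝓕closed F hF).measurableSet (hφ F hF)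
      fun j => h _ (mem_biUnion hF (mem_range_self j))
  rw [← BorelSpace.measurable_eq] at h𝓕gen
  have hself : Indep (MeasurableSpace.generateFrom {A}) ‹_› μ :=
    hindep.indep (MeasurableSpace.generateFrom_singleton_le hA) le_rfl
      (IsPiSystem.singleton A) h𝓕pi rfl h𝓕gen
  exact measure_eq_zero_or_one_of_indepSet_self <|
    hself.indepSet_of_measurableSet (MeasurableSpace.measurableSet_generateFrom rfl) hA

theorem isGδ_setOf_ergodic {T : X → X} (hT : Continuous T) :
    IsGδ {μ : {ν : ProbabilityMeasure X // ν.toMeasure.map T = ν.toMeasure} |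
      Ergodic T μ.1.toMeasure} := by
  obtain ⟨Φ, hΦcount, hΦ⟩ := exists_countable_forall_ergodic_iff_isMeanErgodic T
  have heq : {μ : {ν : ProbabilityMeasure X // ν.toMeasure.map T = ν.toMeasure} |
      Ergodic T μ.1.toMeasure} =
      ⋂ f ∈ Φ, Subtype.val ⁻¹' {μ : ProbabilityMeasure X | IsMeanErgodic T μ.toMeasure f} := by
    ext μ
    simp only [mem_ofPred_eq, mem_iInter, mem_preimage]
    exact hΦ μ.1.toMeasure inferInstance ⟨hT.measurable, μ.2⟩
  rw [heq]
  exact IsGδ.biInter hΦcount fun f _ =>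
    (isGδ_setOf_isMeanErgodic hT f).preimage continuous_subtype_val

end ErgodicGδ

section Bernoulli

theorem measureReal_le_sq_add_of_preimage_eq {X : Type*} [MeasurableSpace X] {μ : Measure X}
    [IsFiniteMeasure μ] {T : X → X} (hT : MeasurePreserving T μ μ) {A C : Set X}
    (hA : MeasurableSet A) (hTA : T ⁻¹' A = A) (hC : MeasurableSet C) {n : ℕ}
    (hn : μ.real (C ∩ T^[n] ⁻¹' C) ≤ μ.real C ^ 2) {ε : ℝ} (hε : μ.real (A ∆ C) ≤ ε) :
    μ.real A ≤ (μ.real A + ε) ^ 2 + 2 * ε := by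
  have hiter : μ.real (T^[n] ⁻¹' (A ∆ C)) = μ.real (A ∆ C) :=
    (hT.iterate n).measureReal_preimage (hA.symmDiff hC).nullMeasurableSet
  have hCA : C ⊆ A ∪ A ∆ C := fun x hx => by by_cases hxA : x ∈ A <;> simp [mem_symmDiff, hx, hxA]
  have hCle : μ.real C ≤ μ.real A + ε :=
    (measureReal_mono hCA).trans <| (measureReal_union_le _ _).trans (by gcongr)
  have hAC : A ⊆ C ∩ T^[n] ⁻¹' C ∪ (A ∆ C ∪ T^[n] ⁻¹' (A ∆ C)) := by
    intro x hx
    have hxn : T^[n] x ∈ A := by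
      rwa [← mem_preimage, (show Function.IsFixedPt (preimage T) A from hTA).preimage_iterate]
    by_cases hxC : x ∈ C <;> by_cases hxnC : T^[n] x ∈ C <;>
      simp [mem_symmDiff, hx, hxn, hxC, hxnC]
  calc μ.real A
      ≤ μ.real (C ∩ T^[n] ⁻¹' C) + (μ.real (A ∆ C) + μ.real (T^[n] ⁻¹' (A ∆ C))) :=
        (measureReal_mono hAC).trans <| (measureReal_union_le _ _).trans <|
          add_le_add_right (measureReal_union_le _ _) _
    _ ≤ μ.real C ^ 2 + (ε + ε) := by rw [hiter]; gcongr
    _ ≤ (μ.real A + ε) ^ 2 + 2 * ε := by rw [two_mul]; gcongr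

theorem preErgodic_of_measureDense {X : Type*} [MeasurableSpace X] {μ : Measure X}
    [IsProbabilityMeasure μ] {T : X → X} (hT : MeasurePreserving T μ μ) {𝒞 : Set (Set X)}
    (h𝒞 : μ.MeasureDense 𝒞)
    (hindep : ∀ C ∈ 𝒞, ∃ n, μ (C ∩ T^[n] ⁻¹' C) ≤ μ C ^ 2) : PreErgodic T μ := by
  refine preErgodic_of_forall_prob_eq_zero_or_one fun A hA hTA => ?_
  have hle (ε : ℝ) (hε : 0 < ε) : μ.real A ≤ (μ.real A + ε) ^ 2 + 2 * ε := by
    obtain ⟨C, hC, hAC⟩ := h𝒞.approx A hA (measure_ne_top _ _) ε hε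
    obtain ⟨n, hn⟩ := hindep C hC
    have hreal : μ.real (C ∩ T^[n] ⁻¹' C) ≤ μ.real C ^ 2 := by
      rw [measureReal_def, measureReal_def, ← ENNReal.toReal_pow]
      exact ENNReal.toReal_mono (by finiteness) hn
    exact measureReal_le_sq_add_of_preimage_eq hT hA hTA (h𝒞.measurable C hC) hreal
      (ENNReal.toReal_le_of_le_ofReal hε.le hAC.le)
  have hlim : Tendsto (fun ε : ℝ => (μ.real A + ε) ^ 2 + 2 * ε) (𝓝[>] 0) (𝓝 (μ.real A ^ 2)) := by
    have hcont : Continuous fun ε : ℝ => (μ.real A + ε) ^ 2 + 2 * ε := by fun_prop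
    simpa using (hcont.tendsto 0).mono_left nhdsWithin_le_nhds
  have hsq : μ.real A ≤ μ.real A ^ 2 := ge_of_tendsto hlim (eventually_mem_nhdsWithin.mono hle)
  rcases (measureReal_nonneg (μ := μ) (s := A)).eq_or_lt with hzero | hpos
  · exact .inl ((measureReal_eq_zero_iff).1 hzero.symm)
  · have hone : 1 ≤ μ.real A := le_of_mul_le_mul_left (by linarith) hpos
    exact .inr ((ENNReal.toReal_eq_one_iff _).1 (measureReal_le_one.antisymm hone))

variable {M : Type*}

theorem fullShift_iterate_apply (n : ℕ) (x : ℤ → M) (i : ℤ) :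
    fullShift^[n] x i = x (i - n) := by
  induction n generalizing x with
  | zero => simp
  | succ n ih =>
    rw [Function.iterate_succ_apply, ih, fullShift]
    push_cast
    congr 1
    ring

theorem continuous_fullShift [TopologicalSpace M] :
    Continuous (fullShift : (ℤ → M) → ℤ → M) :=
  continuous_pi fun i => continuous_apply (i - 1)

variable [MeasurableSpace M]

theorem measurable_fullShift : Measurable (fullShift : (ℤ → M) → ℤ → M) :=
  measurable_pi_lambda _ fun i => measurable_pi_apply (i - 1)

variable (μ : Measure M) [IsProbabilityMeasure μ]

theorem measurePreserving_fullShift_infinitePi :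
    MeasurePreserving fullShift (Measure.infinitePi fun _ : ℤ => μ)
      (Measure.infinitePi fun _ : ℤ => μ) :=
  ⟨measurable_fullShift, Measure.map_infinitePi_infinitePi_of_inj (P := fun _ : ℤ => μ)
    (sub_left_injective (b := (1 : ℤ)))⟩

theorem exists_disjoint_image_sub_natCast (s : Finset ℤ) :
    ∃ n : ℕ, Disjoint s (s.image fun i => i - n) := by
  let m := s.sup Int.natAbs
  refine ⟨2 * m + 1, Finset.disjoint_left.2 fun i hi hi' => ?_⟩
  obtain ⟨j, hj, rfl⟩ := Finset.mem_image.1 hi'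
  have hjm : j.natAbs ≤ m := Finset.le_sup hj
  have him : (j - (2 * m + 1 : ℕ)).natAbs ≤ m := Finset.le_sup (f := Int.natAbs) hi
  lia

theorem indepFun_restrict_comp_fullShift_iterate {s : Finset ℤ} {n : ℕ}
    (hn : Disjoint s (s.image fun i => i - n)) :
    IndepFun s.restrict (s.restrict ∘ fullShift^[n]) (Measure.infinitePi fun _ : ℤ => μ) := by
  have hcoord := (iIndepFun_infinitePi (P := fun _ : ℤ => μ) (X := fun _ ω => ω)
    fun _ => measurable_id).indepFun_finset s _ hn fun _ => measurable_pi_apply _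
  have hreindex : Measurable fun (y : s.image (fun i => i - (n : ℤ)) → M) (i : s) =>
      y ⟨i - n, Finset.mem_image_of_mem _ i.2⟩ :=
    measurable_pi_lambda _ fun _ => measurable_pi_apply _
  have heq : s.restrict ∘ fullShift^[n] = fun (ω : ℤ → M) (i : s) => ω (i - n) :=
    funext₂ fun ω i => fullShift_iterate_apply n ω i
  rw [heq]
  exact hcoord.comp measurable_id hreindex

theorem ergodic_fullShift_infinitePi : Ergodic fullShift (Measure.infinitePi fun _ : ℤ => μ) := by
  have hT := measurePreserving_fullShift_infinitePi μ
  refine ⟨hT, preErgodic_of_measureDense hT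
    (Measure.MeasureDense.of_generateFrom_isSetAlgebra_finite _ isSetAlgebra_measurableCylinders
      generateFrom_measurableCylinders.symm) fun C hC => ?_⟩
  obtain ⟨s, S, hS, rfl⟩ := (mem_measurableCylinders C).1 hC
  obtain ⟨n, hn⟩ := exists_disjoint_image_sub_natCast s
  have hmul := (indepFun_restrict_comp_fullShift_iterate μ hn).measure_inter_preimage_eq_mul
    S S hS hS
  rw [preimage_comp] at hmul
  refine ⟨n, (hmul.trans ?_).le⟩
  rw [sq]
  exact congrArg (_ * ·)
    ((hT.iterate n).measure_preimage (MeasurableSet.cylinder s hS).nullMeasurableSet)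

end Bernoulli

section OrbitAverage

variable {X : Type*} [MeasurableSpace X] {T : X → X} {ν : Measure X} {N : ℕ}

/-- The average `N⁻¹ ∑_{r < N} ν ∘ T⁻ʳ` of the first `N` translates of `ν` along `T`. It turns an
invariant measure of `T^[N]` into an invariant measure of `T`. -/
noncomputable def orbitAverage (T : X → X) (N : ℕ) (ν : Measure X) : Measure X :=
  (N : ℝ≥0∞)⁻¹ • ∑ r ∈ Finset.range N, ν.map T^[r]

theorem orbitAverage_apply (hT : Measurable T) {A : Set X} (hA : MeasurableSet A) :
    orbitAverage T N ν A = (N : ℝ≥0∞)⁻¹ * ∑ r ∈ Finset.range N, ν (T^[r] ⁻¹' A) := by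
  simp only [orbitAverage, Measure.smul_apply, Measure.finsetSum_apply, smul_eq_mul,
    Measure.map_apply (hT.iterate _) hA]

theorem isProbabilityMeasure_orbitAverage [IsProbabilityMeasure ν] (hT : Measurable T)
    (hN : N ≠ 0) : IsProbabilityMeasure (orbitAverage T N ν) := by
  refine ⟨?_⟩
  simp only [orbitAverage_apply hT MeasurableSet.univ, preimage_univ, measure_univ,
    Finset.sum_const, Finset.card_range, nsmul_eq_mul, mul_one]
  exact ENNReal.inv_mul_cancel (Nat.cast_ne_zero.2 hN) (ENNReal.natCast_ne_top N)

theorem map_orbitAverage_of_map_iterate_eq (hT : Measurable T) (hν : ν.map T^[N] = ν) :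
    (orbitAverage T N ν).map T = orbitAverage T N ν := by
  have hsucc (r : ℕ) : (ν.map T^[r]).map T = ν.map T^[r + 1] := by
    rw [Measure.map_map hT (hT.iterate r), ← Function.iterate_succ']
  have hsum : ∑ r ∈ Finset.range N, ν.map T^[r + 1] = ∑ r ∈ Finset.range N, ν.map T^[r] := by
    cases N with
    | zero => rfl
    | succ n =>
      rw [Finset.sum_range_succ, hν, Finset.sum_range_succ', Function.iterate_zero, Measure.map_id]
  rw [orbitAverage, Measure.map_smul, Measure.map_finset_sum hT.aemeasurable]
  simp only [hsucc, hsum]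

theorem ergodic_orbitAverage [IsProbabilityMeasure ν] (hT : Measurable T) (hN : N ≠ 0)
    (h : Ergodic T^[N] ν) : Ergodic T (orbitAverage T N ν) := by
  have := isProbabilityMeasure_orbitAverage (ν := ν) hT hN
  refine ⟨⟨hT, map_orbitAverage_of_map_iterate_eq hT h.map_eq⟩,
    preErgodic_of_forall_prob_eq_zero_or_one fun A hA hTA => ?_⟩
  have hfix : Function.IsFixedPt (preimage T) A := hTA
  have hAν : orbitAverage T N ν A = ν A := by
    simp only [orbitAverage_apply hT hA, (hfix.preimage_iterate _).eq, Finset.sum_const,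
      Finset.card_range, nsmul_eq_mul]
    exact ENNReal.inv_mul_cancel_left' (by simp [hN]) (by simp)
  rw [hAν]
  exact h.toPreErgodic.prob_eq_zero_or_one hA (hfix.preimage_iterate N)

theorem abs_measureReal_orbitAverage_sub_le [IsProbabilityMeasure ν] (hT : Measurable T)
    (hN : N ≠ 0) {A : Set X} (hA : MeasurableSet A) {c : ℝ} (hc : c ∈ Icc 0 1) (B : Finset ℕ)
    (hB : ∀ r < N, r ∉ B → ν.real (T^[r] ⁻¹' A) = c) :
    |(orbitAverage T N ν).real A - c| ≤ B.card / N := by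
  have hN' : (N : ℝ) ≠ 0 := Nat.cast_ne_zero.2 hN
  have hreal : (orbitAverage T N ν).real A - c =
      (N : ℝ)⁻¹ * ∑ r ∈ Finset.range N, (ν.real (T^[r] ⁻¹' A) - c) := by
    rw [measureReal_def, orbitAverage_apply hT hA, ENNReal.toReal_mul,
      ENNReal.toReal_sum fun _ _ => measure_ne_top _ _, Finset.sum_sub_distrib, Finset.sum_const,
      Finset.card_range, nsmul_eq_mul, mul_sub, inv_mul_cancel_left₀ hN', ENNReal.toReal_inv,
      ENNReal.toReal_natCast]
    rfl
  have hterm : ∀ r ∈ Finset.range N, |ν.real (T^[r] ⁻¹' A) - c| ≤ if r ∈ B then 1 else 0 := by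
    intro r hr
    split_ifs with hrB
    · exact abs_sub_le_of_nonneg_of_le measureReal_nonneg measureReal_le_one hc.1 hc.2
    · rw [hB r (Finset.mem_range.1 hr) hrB, sub_self, abs_zero]
  calc |(orbitAverage T N ν).real A - c|
      ≤ (N : ℝ)⁻¹ * ∑ r ∈ Finset.range N, if r ∈ B then 1 else 0 := by
        rw [hreal, abs_mul, abs_of_nonneg (by positivity)]
        gcongr
        exact (Finset.abs_sum_le_sum_abs _ _).trans (Finset.sum_le_sum hterm)
    _ ≤ (N : ℝ)⁻¹ * B.card := by
        rw [Finset.sum_boole]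
        gcongr
        exact fun r hr => (Finset.mem_filter.1 hr).2
    _ = B.card / N := by rw [div_eq_inv_mul]

end OrbitAverage

section Gluing

variable {M : Type*}

/-- The sequence whose restriction to the block `[kN, (k + 1)N)` is the restriction of `ω k` to
`[-N, 0)`, translated by `(k + 1)N`. Reading the blocks off `[-N, 0)` makes `glueBlocks N ω` agree
with `ω (-1)` there, the window seen through the origin by the first `N` iterates of the shift. -/
def glueBlocks (N : ℕ) (ω : ℤ → ℤ → M) : ℤ → M := fun i => ω (i / N) (i % N - N)

theorem glueBlocks_apply_of_mem_Ico {N : ℕ} (ω : ℤ → ℤ → M) {i : ℤ} (hi : i ∈ Ico (-(N : ℤ)) 0) :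
    glueBlocks N ω i = ω (-1) i := by
  have hmod : i % N = i + N := by
    rw [← Int.add_emod_right, Int.emod_eq_of_lt (by linarith [hi.1]) (by linarith [hi.2])]
  have hdiv : i / N = -1 := by
    have hpos : (0 : ℤ) < N := by linarith [hi.1, hi.2]
    rw [Int.ediv_eq_iff_of_pos hpos]
    constructor <;> linarith [hi.1, hi.2]
  rw [glueBlocks, hmod, hdiv, add_sub_cancel_right]

theorem semiconj_glueBlocks {N : ℕ} (hN : N ≠ 0) :
    Function.Semiconj (glueBlocks N (M := M)) fullShift fullShift^[N] := by
  intro ω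
  ext i
  have hN' : (N : ℤ) ≠ 0 := Nat.cast_ne_zero.2 hN
  rw [fullShift_iterate_apply, glueBlocks, glueBlocks, fullShift, Int.sub_emod_right,
    Int.sub_ediv_of_dvd _ dvd_rfl, Int.ediv_self hN']

variable [MeasurableSpace M]

theorem measurable_glueBlocks (N : ℕ) : Measurable (glueBlocks N (M := M)) :=
  measurable_pi_lambda _ fun _ => (measurable_pi_apply _).comp (measurable_pi_apply _)

/-- The ergodic measure approximating `μ`: glue independent `μ`-distributed blocks of length `N`,
then average over the position of the origin in its block. -/
noncomputable def blockApproximation (μ : Measure (ℤ → M)) (N : ℕ) : Measure (ℤ → M) :=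
  orbitAverage fullShift N ((Measure.infinitePi fun _ : ℤ => μ).map (glueBlocks N))

variable (μ : Measure (ℤ → M)) [IsProbabilityMeasure μ] {N : ℕ}

theorem isProbabilityMeasure_map_glueBlocks :
    IsProbabilityMeasure ((Measure.infinitePi fun _ : ℤ => μ).map (glueBlocks N)) :=
  Measure.isProbabilityMeasure_map (measurable_glueBlocks N).aemeasurable

theorem isProbabilityMeasure_blockApproximation (hN : N ≠ 0) :
    IsProbabilityMeasure (blockApproximation μ N) :=
  have := isProbabilityMeasure_map_glueBlocks μ (N := N)
  isProbabilityMeasure_orbitAverage measurable_fullShift hN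

theorem ergodic_blockApproximation (hN : N ≠ 0) : Ergodic fullShift (blockApproximation μ N) :=
  have := isProbabilityMeasure_map_glueBlocks μ (N := N)
  ergodic_orbitAverage measurable_fullShift hN <|
    MeasurePreserving.ergodic_of_ergodic_semiconj ⟨measurable_glueBlocks N, rfl⟩
      (ergodic_fullShift_infinitePi μ) (measurable_fullShift.iterate N) (semiconj_glueBlocks hN)

variable {μ}

theorem measureReal_map_glueBlocks_preimage_cylinder (hμ : MeasurePreserving fullShift μ μ)
    {s : Finset ℤ} {S : Set (s → M)} (hS : MeasurableSet S) {r : ℕ}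
    (hr : ∀ i ∈ s, i - r ∈ Ico (-(N : ℤ)) 0) :
    ((Measure.infinitePi fun _ : ℤ => μ).map (glueBlocks N)).real
      (fullShift^[r] ⁻¹' cylinder s S) = μ.real (cylinder s S) := by
  have hC : MeasurableSet (cylinder s S) := MeasurableSet.cylinder (α := fun _ => M) s hS
  have hCr : MeasurableSet (fullShift^[r] ⁻¹' cylinder s S) := measurable_fullShift.iterate r hC
  have hpre : glueBlocks N ⁻¹' (fullShift^[r] ⁻¹' cylinder s S) =
      Function.eval (-1) ⁻¹' (fullShift^[r] ⁻¹' cylinder s S) := by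
    ext ω
    have hagree : s.restrict (fullShift^[r] (glueBlocks N ω)) =
        s.restrict (fullShift^[r] (ω (-1))) := by
      ext i
      simp only [Finset.restrict, fullShift_iterate_apply]
      exact glueBlocks_apply_of_mem_Ico ω (hr i i.2)
    simp only [mem_preimage, mem_cylinder, hagree, Function.eval]
  rw [map_measureReal_apply (measurable_glueBlocks N) hCr, hpre,
    (measurePreserving_eval_infinitePi (fun _ : ℤ => μ) (-1)).measureReal_preimage
      hCr.nullMeasurableSet, (hμ.iterate r).measureReal_preimage hC.nullMeasurableSet]

theorem abs_measureReal_blockApproximation_cylinder_sub_le (hμ : MeasurePreserving fullShift μ μ)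
    (hN : N ≠ 0) {s : Finset ℤ} {S : Set (s → M)} (hS : MeasurableSet S) {m : ℕ}
    (hm : ∀ i ∈ s, i.natAbs ≤ m) :
    |(blockApproximation μ N).real (cylinder s S) - μ.real (cylinder s S)| ≤ (2 * m + 1) / N := by
  have := isProbabilityMeasure_map_glueBlocks μ (N := N)
  let B := Finset.range (m + 1) ∪ Finset.Ico (N + 1 - m) N
  have hB : B.card ≤ 2 * m + 1 := by
    refine (Finset.card_union_le _ _).trans ?_
    rw [Finset.card_range, Nat.card_Ico]
    lia
  refine (abs_measureReal_orbitAverage_sub_le measurable_fullShift hN (.cylinder s hS)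
    ⟨measureReal_nonneg, measureReal_le_one⟩ B fun r hrN hrB => ?_).trans ?_
  · refine measureReal_map_glueBlocks_preimage_cylinder hμ hS fun i hi => ?_
    simp only [B, Finset.mem_union, Finset.mem_range, Finset.mem_Ico] at hrB
    have := hm i hi
    constructor <;> lia
  · gcongr
    exact_mod_cast hB

theorem tendsto_blockApproximation_cylinder (hμ : MeasurePreserving fullShift μ μ)
    {C : Set (ℤ → M)} (hC : C ∈ measurableCylinders fun _ : ℤ => M) :
    Tendsto (fun N => (blockApproximation μ N).real C) atTop (𝓝 (μ.real C)) := by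
  obtain ⟨s, S, hS, rfl⟩ := (mem_measurableCylinders C).1 hC
  rw [tendsto_iff_dist_tendsto_zero]
  refine squeeze_zero' (.of_forall fun _ => dist_nonneg) ?_
    (tendsto_const_div_atTop_nhds_zero_nat (2 * ((s.sup Int.natAbs : ℕ) : ℝ) + 1))
  filter_upwards [eventually_ne_atTop 0] with N hN
  exact abs_measureReal_blockApproximation_cylinder_sub_le hμ hN hS fun i hi => Finset.le_sup hi

end Gluing

section Density

theorem tendsto_probabilityMeasure_of_forall_measurableCylinders {ι κ : Type*} {α : ι → Type*}
    [∀ i, TopologicalSpace (α i)] [∀ i, MeasurableSpace (α i)] [∀ i, OpensMeasurableSpace (α i)]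
    [OpensMeasurableSpace (∀ i, α i)] [SecondCountableTopology (∀ i, α i)]
    {l : Filter κ} [l.IsCountablyGenerated] {μs : κ → ProbabilityMeasure (∀ i, α i)}
    {μ : ProbabilityMeasure (∀ i, α i)}
    (h : ∀ C ∈ measurableCylinders α,
      Tendsto (fun k => (μs k).toMeasure.real C) l (𝓝 (μ.toMeasure.real C))) :
    Tendsto μs l (𝓝 μ) := by
  refine isPiSystem_measurableCylinders.tendsto_probabilityMeasure_of_tendsto_of_mem
    (fun C hC => .of_mem_measurableCylinders hC) (fun U hU x hx => ?_)
    fun C hC => NNReal.tendsto_coe.1 (h C hC)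
  obtain ⟨s, u, hu, hsub⟩ := isOpen_pi_iff.1 hU x hx
  have hopen : IsOpen ((s : Set ι).pi u) := isOpen_set_pi s.finite_toSet fun i hi => (hu i hi).1
  refine ⟨(s : Set ι).pi u, ?_, hopen.mem_nhds fun i hi => (hu i hi).2, hsub⟩
  refine (mem_measurableCylinders _).2 ⟨s, univ.pi fun i => u i, ?_, ?_⟩
  · exact .univ_pi fun i => (hu i i.2).1.measurableSet
  · ext y
    simp [mem_cylinder]

variable {M : Type*} [TopologicalSpace M] [SecondCountableTopology M] [MeasurableSpace M]
  [OpensMeasurableSpace M]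

theorem dense_setOf_ergodic_fullShift :
    Dense {μ : {ν : ProbabilityMeasure (ℤ → M) // ν.toMeasure.map fullShift = ν.toMeasure} |
      Ergodic fullShift μ.1.toMeasure} := by
  rintro ⟨μ, hμ⟩
  have herg (k : ℕ) : Ergodic fullShift (blockApproximation μ.toMeasure (k + 1)) :=
    ergodic_blockApproximation _ k.succ_ne_zero
  let approx (k : ℕ) :
      {ν : ProbabilityMeasure (ℤ → M) // ν.toMeasure.map fullShift = ν.toMeasure} :=
    ⟨⟨blockApproximation μ.toMeasure (k + 1),
      isProbabilityMeasure_blockApproximation _ k.succ_ne_zero⟩, (herg k).map_eq⟩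
  have hlim : Tendsto approx atTop (𝓝 ⟨μ, hμ⟩) :=
    tendsto_subtype_rng.2 <| tendsto_probabilityMeasure_of_forall_measurableCylinders fun C hC =>
      (tendsto_blockApproximation_cylinder ⟨measurable_fullShift, hμ⟩ hC).comp
        (tendsto_add_atTop_nat 1)
  exact mem_closure_of_tendsto hlim (.of_forall herg)

end Density

theorem fullShift_ergodic_residual_general {M : Type*} [TopologicalSpace M]
    [TopologicalSpace.PseudoMetrizableSpace M] [SecondCountableTopology M]
    [MeasurableSpace M] [BorelSpace M] :
    {μ : {ν : ProbabilityMeasure (ℤ → M) // ν.toMeasure.map fullShift = ν.toMeasure} |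
        Ergodic fullShift μ.1.toMeasure} ∈
      residual {ν : ProbabilityMeasure (ℤ → M) // ν.toMeasure.map fullShift = ν.toMeasure} :=
  residual_of_dense_Gδ (isGδ_setOf_ergodic continuous_fullShift) dense_setOf_ergodic_fullShift

/-- For the full shift `T` on `X = ∏_{n ∈ ℤ} M` over a perfect Polish metric
space `M`, the set of ergodic `T`-invariant Borel probability measures is residual in the
space `M(T)` of `T`-invariant Borel probability measures with the weak topology. -/
theorem fullShift_ergodic_residual {M : Type*} [MetricSpace M] [CompleteSpace M]
    [TopologicalSpace.SeparableSpace M] [PerfectSpace M]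
    [MeasurableSpace M] [BorelSpace M] :
    {μ : {ν : ProbabilityMeasure (ℤ → M) // ν.toMeasure.map fullShift = ν.toMeasure} |
        Ergodic fullShift μ.1.toMeasure} ∈
      residual {ν : ProbabilityMeasure (ℤ → M) // ν.toMeasure.map fullShift = ν.toMeasure} :=
  have := UniformSpace.secondCountable_of_separable M
  fullShift_ergodic_residual_general
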